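/- Let Σ ∈ S^p, and for τ > 0 let (L̂(τ), D̂(τ)) be the unique minimizer of F(L,D) = τ‖L‖_* + (1/2)‖Σ − (L+D)‖_F² over L ∈ S^p_+ and diagonal D. Then the map τ ↦ (L̂(τ), D̂(τ)) is continuous on (0, ∞). -/

import Mathlib

open Matrix MeasureTheory ProbabilityTheory BigOperators

/-- `pdiag M`: the matrix `M` with all off-diagonal entries set to zero. -/
def pdiag {p : ℕ} (M : Matrix (Fin p) (Fin p) ℝ) : Matrix (Fin p) (Fin p) ℝ :=
  Matrix.of fun i j => if i = j then M i j else 0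

/-- `poffdiag M = M - pdiag M`: the off-diagonal part of `M`. -/
def poffdiag {p : ℕ} (M : Matrix (Fin p) (Fin p) ℝ) : Matrix (Fin p) (Fin p) ℝ :=
  M - pdiag M

/-- Frobenius norm of a real matrix. -/
noncomputable def frobNorm {p q : ℕ} (M : Matrix (Fin p) (Fin q) ℝ) : ℝ :=
  Real.sqrt (∑ i, ∑ j, (M i j) ^ 2)

/-- The singular values of a real matrix (as the square roots of the eigenvalues of `Mᵀ M`,
in no particular order, with multiplicity, padded by zeros). -/
noncomputable def singVals {p q : ℕ} (M : Matrix (Fin p) (Fin q) ℝ) : Fin q → ℝ :=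
  fun i => Real.sqrt ((Matrix.posSemidef_conjTranspose_mul_self M).isHermitian.eigenvalues i)

/-- Nuclear norm: sum of the singular values. -/
noncomputable def nucNorm {p q : ℕ} (M : Matrix (Fin p) (Fin q) ℝ) : ℝ :=
  ∑ i, singVals M i

/-- Spectral (operator) norm: the largest singular value. -/
noncomputable def specNorm {p q : ℕ} (M : Matrix (Fin p) (Fin q) ℝ) : ℝ :=
  ⨆ i, singVals M i

/-- `(2,∞)`-norm: the maximal Euclidean norm of a row. -/
noncomputable def rowNorm {p r : ℕ} (U : Matrix (Fin p) (Fin r) ℝ) : ℝ :=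
  ⨆ i, Real.sqrt (∑ j, (U i j) ^ 2)

/-- `sinΘ` distance between two column-orthonormal matrices, measured in spectral norm:
`‖sinΘ(U, V)‖ = ‖U Uᵀ - V Vᵀ‖`. -/
noncomputable def sinTheta {p r : ℕ} (U V : Matrix (Fin p) (Fin r) ℝ) : ℝ :=
  specNorm (U * Uᵀ - V * Vᵀ)

/-- `eigDesc M k` : the `k`-th largest eigenvalue (1-indexed) of a symmetric matrix `M`. -/
noncomputable def eigDesc {p : ℕ} (M : Matrix (Fin p) (Fin p) ℝ) (k : ℕ) : ℝ :=
  if h : M.IsHermitian then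
    (((List.ofFn h.eigenvalues).insertionSort (· ≥ ·)).getD (k - 1) 0)
  else 0

/-- `svDesc M k` : the `k`-th largest singular value (1-indexed) of `M`. -/
noncomputable def svDesc {p q : ℕ} (M : Matrix (Fin p) (Fin q) ℝ) (k : ℕ) : ℝ :=
  (((List.ofFn (singVals M)).insertionSort (· ≥ ·)).getD (k - 1) 0)

/-- Eigenvalue soft-thresholding operator `D_τ⁺`: for a symmetric matrix
`M = Σᵢ λᵢ uᵢ uᵢᵀ`, `D_τ⁺(M) = Σᵢ max (λᵢ - τ) 0 • uᵢ uᵢᵀ` (junk value `0` otherwise). -/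
noncomputable def softThresh {p : ℕ} (τ : ℝ) (M : Matrix (Fin p) (Fin p) ℝ) :
    Matrix (Fin p) (Fin p) ℝ :=
  if h : M.IsHermitian then
    (h.eigenvectorUnitary : Matrix (Fin p) (Fin p) ℝ) *
      Matrix.diagonal (fun i => max (h.eigenvalues i - τ) 0) *
      (star (h.eigenvectorUnitary : Matrix (Fin p) (Fin p) ℝ))
  else 0

/-- The `p × r` matrix whose columns are (orthonormal) eigenvectors of the symmetric matrix
`M` corresponding to its `r` largest eigenvalues ("first `r` eigenvectors"). -/
noncomputable def topEigenvectors {p : ℕ} (M : Matrix (Fin p) (Fin p) ℝ) (r : ℕ) :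
    Matrix (Fin p) (Fin r) ℝ :=
  if h : M.IsHermitian then
    Matrix.of fun i (j : Fin r) =>
      if hj : (j : ℕ) < p then
        (h.eigenvectorUnitary : Matrix (Fin p) (Fin p) ℝ) i
          ((Tuple.sort h.eigenvalues) (Fin.rev ⟨(j : ℕ), hj⟩))
      else 0
  else 0

/-- The objective function `F(L, D) = τ ‖L‖_* + (1/2) ‖Σ - (L + D)‖_F²`. -/
noncomputable def objF {p : ℕ} (τ : ℝ) (S L D : Matrix (Fin p) (Fin p) ℝ) : ℝ :=
  τ * nucNorm L + (1 / 2) * (frobNorm (S - (L + D))) ^ 2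

/-- `(L, D)` is a global minimizer of the relaxed-MTFA objective `F` over
`L ∈ S^p₊` and diagonal `D`. -/
def IsRMTFAMin {p : ℕ} (τ : ℝ) (S L D : Matrix (Fin p) (Fin p) ℝ) : Prop :=
  L.PosSemidef ∧ D = pdiag D ∧
    ∀ L' D' : Matrix (Fin p) (Fin p) ℝ, L'.PosSemidef → D' = pdiag D' →
      objF τ S L D ≤ objF τ S L' D'

open Filter Topology

/-!
Write `M = L + D` for the fitted matrix and `R = S - M` for the residual at a minimizer. The
feasible set is convex and on it the nuclear norm is the trace, so minimality gives the variational
inequality `⟨R, M' - M⟩ ≤ τ (tr L' - tr L)` for every feasible `(L', D')`. Adding it for two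
parameters gives `‖M₂ - M₁‖² ≤ (τ₁ - τ₂) (tr L₂ - tr L₁)`, so `M` depends continuously on `τ`.
Testing it on the congruences `(1 + t A) L (1 + t A)ᵀ` for all real `t` gives the complementary
slackness `2 τ L = L (R + Rᵀ)`. Since `R` has zero diagonal, the diagonal of the right-hand side
does not change when `L` is replaced by `M`, which expresses `diag L`, and hence `L` and `D`, as a
continuous function of `τ` and `M`.
-/

theorem nonneg_of_forall_mul_add_sq_nonneg {a b : ℝ}
    (h : ∀ t ∈ Set.Ioc (0 : ℝ) 1, 0 ≤ t * a + t ^ 2 * b) : 0 ≤ a := by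
  have hlim : Tendsto (fun t : ℝ ↦ a + t * b) (𝓝[>] 0) (𝓝 a) := by
    have hcont : Continuous fun t : ℝ ↦ a + t * b := by fun_prop
    simpa using (hcont.tendsto 0).mono_left nhdsWithin_le_nhds
  refine ge_of_tendsto hlim ?_
  filter_upwards [Ioc_mem_nhdsGT one_pos] with t ht
  exact nonneg_of_mul_nonneg_right (by linarith [h t ht]) ht.1

theorem eq_zero_of_forall_mul_add_sq_nonneg {a b : ℝ} (h : ∀ t : ℝ, 0 ≤ t * a + t ^ 2 * b) :
    a = 0 := by
  have hdiscrim : discrim b a 0 ≤ 0 := discrim_le_zero fun t ↦ by linarith [h t]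
  rw [discrim] at hdiscrim
  exact pow_eq_zero_iff two_ne_zero |>.1 (le_antisymm (by linarith) (sq_nonneg a))

theorem trace_cfc_eq_sum_eigenvalues {n 𝕜 : Type*} [Fintype n] [DecidableEq n] [RCLike 𝕜]
    {A : Matrix n n 𝕜} (hA : A.IsHermitian) (f : ℝ → ℝ) :
    (cfc f A).trace = ∑ i, (f (hA.eigenvalues i) : 𝕜) := by
  rw [hA.cfc_eq, IsHermitian.cfc, Unitary.conjStarAlgAut_apply, trace_mul_cycle,
    Unitary.coe_star_mul_self, one_mul, trace_diagonal]
  rfl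

open scoped ComplexOrder MatrixOrder in
theorem cfc_sqrt_conjTranspose_mul_self {n 𝕜 : Type*} [Fintype n] [DecidableEq n] [RCLike 𝕜]
    {A : Matrix n n 𝕜} (hA : A.PosSemidef) : cfc Real.sqrt (Aᴴ * A) = A := by
  have hself : IsSelfAdjoint A := hA.isHermitian
  calc
    cfc Real.sqrt (Aᴴ * A) = cfc Real.sqrt (cfc (fun x : ℝ ↦ x ^ 2) A) := by
      rw [hA.isHermitian.eq, ← sq, cfc_pow_id A 2]
    _ = cfc (fun x ↦ √(x ^ 2)) A := (cfc_comp' Real.sqrt (fun x ↦ x ^ 2) A).symm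
    _ = cfc (fun x : ℝ ↦ x) A :=
      cfc_congr fun _ hx ↦ Real.sqrt_sq (spectrum_nonneg_of_nonneg hA.nonneg hx)
    _ = A := cfc_id' ℝ A

section FrobeniusNorm

variable {p q : ℕ}

open scoped Matrix.Norms.Frobenius in
theorem frobNorm_eq_norm (M : Matrix (Fin p) (Fin q) ℝ) : frobNorm M = ‖M‖ := by
  simp [frobNorm, frobenius_norm_def, Real.sqrt_eq_rpow]

open scoped Matrix.Norms.Frobenius in
theorem frobNorm_eq_zero {M : Matrix (Fin p) (Fin q) ℝ} : frobNorm M = 0 ↔ M = 0 := by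
  rw [frobNorm_eq_norm, norm_eq_zero]

open scoped Matrix.Norms.Frobenius in
theorem tendsto_iff_frobNorm_sub_tendsto_zero {α : Type*} {l : Filter α}
    {f : α → Matrix (Fin p) (Fin q) ℝ} {M : Matrix (Fin p) (Fin q) ℝ} :
    Tendsto f l (𝓝 M) ↔ Tendsto (fun x ↦ frobNorm (f x - M)) l (𝓝 0) := by
  simp only [frobNorm_eq_norm]
  exact tendsto_iff_norm_sub_tendsto_zero

theorem frobNorm_nonneg (M : Matrix (Fin p) (Fin q) ℝ) : 0 ≤ frobNorm M :=
  Real.sqrt_nonneg _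

theorem frobNorm_sq_eq_trace (M : Matrix (Fin p) (Fin q) ℝ) :
    frobNorm M ^ 2 = (Mᵀ * M).trace := by
  rw [frobNorm, Real.sq_sqrt (by positivity), Finset.sum_comm]
  simp [trace, mul_apply, sq]

theorem frobNorm_sub_smul_sq (A B : Matrix (Fin p) (Fin q) ℝ) (t : ℝ) :
    frobNorm (A - t • B) ^ 2 =
      frobNorm A ^ 2 - 2 * t * (Aᵀ * B).trace + t ^ 2 * frobNorm B ^ 2 := by
  have hsymm : (Bᵀ * A).trace = (Aᵀ * B).trace := by
    rw [← trace_transpose, transpose_mul, transpose_transpose]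
  simp only [frobNorm_sq_eq_trace, transpose_sub, transpose_smul, Matrix.sub_mul, Matrix.mul_sub,
    trace_sub, Matrix.smul_mul, Matrix.mul_smul, trace_smul, smul_eq_mul, hsymm]
  ring

theorem exists_forall_sqrt_frobNorm_sq_add_lt {X : Type*} [PseudoMetricSpace X] {s : Set X}
    {A B : X → Matrix (Fin p) (Fin q) ℝ} (hcont : ContinuousOn (fun x ↦ (A x, B x)) s)
    {x : X} (hx : x ∈ s) {ε : ℝ} (hε : 0 < ε) :
    ∃ δ : ℝ, 0 < δ ∧ ∀ y ∈ s, dist y x < δ →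
      √(frobNorm (A y - A x) ^ 2 + frobNorm (B y - B x) ^ 2) < ε := by
  have hA := tendsto_iff_frobNorm_sub_tendsto_zero.1 (hcont.fst x hx)
  have hB := tendsto_iff_frobNorm_sub_tendsto_zero.1 (hcont.snd x hx)
  have hlim : Tendsto (fun y ↦ √(frobNorm (A y - A x) ^ 2 + frobNorm (B y - B x) ^ 2))
      (𝓝[s] x) (𝓝 0) := by
    simpa using ((hA.pow 2).add (hB.pow 2)).sqrt
  exact Metric.mem_nhdsWithin_iff.1 (hlim.eventually (gt_mem_nhds hε)) |>.imp
    fun δ ⟨hδ, hball⟩ ↦ ⟨hδ, fun y hy hyx ↦ hball ⟨hyx, hy⟩⟩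

end FrobeniusNorm

section DiagonalPart

variable {p : ℕ}

theorem pdiag_eq_diagonal_diag (M : Matrix (Fin p) (Fin p) ℝ) : pdiag M = diagonal M.diag := by
  ext i j
  rcases eq_or_ne i j with rfl | hij <;> simp [pdiag, *]

theorem pdiag_pdiag (M : Matrix (Fin p) (Fin p) ℝ) : pdiag (pdiag M) = pdiag M := by
  simp only [pdiag_eq_diagonal_diag, diag_diagonal]

theorem pdiag_add (A B : Matrix (Fin p) (Fin p) ℝ) : pdiag (A + B) = pdiag A + pdiag B := by
  simp only [pdiag_eq_diagonal_diag, diag_add, diagonal_add, Pi.add_def]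

theorem pdiag_smul (c : ℝ) (M : Matrix (Fin p) (Fin p) ℝ) : pdiag (c • M) = c • pdiag M := by
  simp only [pdiag_eq_diagonal_diag, diag_smul, diagonal_smul]

theorem pdiag_transpose (M : Matrix (Fin p) (Fin p) ℝ) : pdiag Mᵀ = pdiag M := by
  simp only [pdiag_eq_diagonal_diag, diag_transpose]

theorem pdiag_pdiag_mul (A B : Matrix (Fin p) (Fin p) ℝ) :
    pdiag (pdiag A * B) = pdiag A * pdiag B := by
  ext i j
  rcases eq_or_ne i j with rfl | hij <;> simp [pdiag_eq_diagonal_diag, *]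

theorem trace_transpose_mul_pdiag (M : Matrix (Fin p) (Fin p) ℝ) :
    (Mᵀ * pdiag M).trace = frobNorm (pdiag M) ^ 2 := by
  simp [frobNorm_sq_eq_trace, pdiag_eq_diagonal_diag, trace, mul_diagonal]

theorem continuous_pdiag : Continuous (pdiag (p := p)) :=
  (continuous_id.matrix_diag.matrix_diagonal).congr fun M ↦ (pdiag_eq_diagonal_diag M).symm

end DiagonalPart

theorem nucNorm_eq_trace {p : ℕ} {L : Matrix (Fin p) (Fin p) ℝ} (hL : L.PosSemidef) :
    nucNorm L = L.trace := by
  have hsum := trace_cfc_eq_sum_eigenvalues (posSemidef_conjTranspose_mul_self L).isHermitian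
    Real.sqrt
  rw [cfc_sqrt_conjTranspose_mul_self hL] at hsum
  exact hsum.symm

theorem objF_eq_of_posSemidef {p : ℕ} {L : Matrix (Fin p) (Fin p) ℝ} (hL : L.PosSemidef) (τ : ℝ)
    (S D : Matrix (Fin p) (Fin p) ℝ) :
    objF τ S L D = τ * L.trace + 1 / 2 * frobNorm (S - (L + D)) ^ 2 := by
  rw [objF, nucNorm_eq_trace hL]

namespace IsRMTFAMin

variable {p : ℕ} {τ τ₁ τ₂ : ℝ} {S L D L' D' L₁ D₁ L₂ D₂ : Matrix (Fin p) (Fin p) ℝ}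

theorem variational_inequality (h : IsRMTFAMin τ S L D) (hL' : L'.PosSemidef)
    (hD' : D' = pdiag D') :
    ((S - (L + D))ᵀ * (L' + D' - (L + D))).trace ≤ τ * (L'.trace - L.trace) := by
  obtain ⟨hL, hD, hle⟩ := h
  rw [← sub_nonneg]
  refine nonneg_of_forall_mul_add_sq_nonneg (b := 1 / 2 * frobNorm (L' + D' - (L + D)) ^ 2) ?_
  rintro t ⟨ht0, ht1⟩
  have hLt : ((1 - t) • L + t • L').PosSemidef :=
    (hL.smul (sub_nonneg.2 ht1)).add (hL'.smul ht0.le)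
  have hDt : (1 - t) • D + t • D' = pdiag ((1 - t) • D + t • D') := by
    rw [pdiag_add, pdiag_smul, pdiag_smul, ← hD, ← hD']
  have hresidual : S - ((1 - t) • L + t • L' + ((1 - t) • D + t • D')) =
      S - (L + D) - t • (L' + D' - (L + D)) := by module
  have hobj := hle _ _ hLt hDt
  rw [objF_eq_of_posSemidef hL, objF_eq_of_posSemidef hLt, hresidual, frobNorm_sub_smul_sq,
    trace_add, trace_smul, trace_smul, smul_eq_mul, smul_eq_mul] at hobj
  linarith

theorem pdiag_residual (h : IsRMTFAMin τ S L D) : pdiag (S - (L + D)) = 0 := by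
  have hfeasible : D + pdiag (S - (L + D)) = pdiag (D + pdiag (S - (L + D))) := by
    rw [pdiag_add, pdiag_pdiag, ← h.2.1]
  have hle := h.variational_inequality h.1 hfeasible
  rw [← add_assoc, add_sub_cancel_left, trace_transpose_mul_pdiag, sub_self, mul_zero] at hle
  exact frobNorm_eq_zero.1 (pow_eq_zero_iff two_ne_zero |>.1 (hle.antisymm (sq_nonneg _)))

theorem complementary_slackness (h : IsRMTFAMin τ S L D) :
    (2 * τ) • L = L * (S - (L + D) + (S - (L + D))ᵀ) := by
  have hLsymm : Lᵀ = L := h.1.isHermitian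
  set R := S - (L + D) with hR
  refine ext_iff_trace_mul_left.2 fun A ↦ sub_eq_zero.1 ?_
  refine eq_zero_of_forall_mul_add_sq_nonneg
    (b := τ * (A * L * Aᵀ).trace - (Rᵀ * (A * L * Aᵀ)).trace) fun t ↦ ?_
  have hpsd : ((1 + t • A) * L * (1 + t • A)ᵀ).PosSemidef := by
    simpa only [conjTranspose_eq_transpose_of_trivial] using
      h.1.mul_mul_conjTranspose_same (1 + t • A)
  have hle := h.variational_inequality hpsd h.2.1
  have hexpand : (1 + t • A) * L * (1 + t • A)ᵀ =
      L + t • (A * L + L * Aᵀ) + t ^ 2 • (A * L * Aᵀ) := by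
    simp only [transpose_add, transpose_one, transpose_smul, add_mul, mul_add, one_mul, mul_one,
      smul_mul_assoc, mul_smul_comm]
    module
  have htrace : (L * Aᵀ).trace = (A * L).trace := by
    rw [← trace_transpose, transpose_mul, transpose_transpose, hLsymm]
  have hinner_left : (Rᵀ * (A * L)).trace = (A * (L * Rᵀ)).trace := by
    rw [trace_mul_comm, mul_assoc]
  have hinner_right : (Rᵀ * (L * Aᵀ)).trace = (A * (L * R)).trace := by
    rw [← trace_transpose, transpose_mul, transpose_mul, transpose_transpose, transpose_transpose,
      hLsymm, mul_assoc]
  rw [← hR, add_sub_add_right_eq_sub, hexpand] at hle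
  simp only [add_assoc, add_sub_cancel_left, mul_add, trace_add, mul_smul_comm, trace_smul,
    smul_eq_mul, htrace, hinner_left, hinner_right] at hle ⊢
  linarith

theorem diagonal_eq_of_fit (h : IsRMTFAMin τ S L D) (hτ : τ ≠ 0) :
    D = pdiag (L + D) -
      (2 * τ)⁻¹ • pdiag ((L + D) * (S - (L + D) + (S - (L + D))ᵀ)) := by
  have hDmul : pdiag (D * (S - (L + D) + (S - (L + D))ᵀ)) = 0 := by
    rw [h.2.1, pdiag_pdiag_mul, ← h.2.1, pdiag_add, pdiag_transpose, h.pdiag_residual, add_zero,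
      mul_zero]
  have hfit_mul : pdiag ((L + D) * (S - (L + D) + (S - (L + D))ᵀ)) = (2 * τ) • pdiag L := by
    rw [add_mul, pdiag_add, hDmul, add_zero, ← h.complementary_slackness, pdiag_smul]
  rw [hfit_mul, inv_smul_smul₀ (mul_ne_zero two_ne_zero hτ), pdiag_add, add_sub_cancel_left,
    ← h.2.1]

theorem frobNorm_fit_sub_sq_le (h₁ : IsRMTFAMin τ₁ S L₁ D₁) (h₂ : IsRMTFAMin τ₂ S L₂ D₂) :
    frobNorm (L₂ + D₂ - (L₁ + D₁)) ^ 2 ≤ (τ₁ - τ₂) * (L₂.trace - L₁.trace) := by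
  have hle₁ := h₁.variational_inequality h₂.1 h₂.2.1
  have hle₂ := h₂.variational_inequality h₁.1 h₁.2.1
  have hsum : frobNorm (L₂ + D₂ - (L₁ + D₁)) ^ 2 =
      ((S - (L₁ + D₁))ᵀ * (L₂ + D₂ - (L₁ + D₁))).trace +
        ((S - (L₂ + D₂))ᵀ * (L₁ + D₁ - (L₂ + D₂))).trace := by
    rw [frobNorm_sq_eq_trace, ← neg_sub (L₂ + D₂) (L₁ + D₁), mul_neg, trace_neg,
      ← sub_eq_add_neg, ← trace_sub, ← sub_mul, ← transpose_sub, sub_sub_sub_cancel_left]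
  linarith

theorem trace_le (h : IsRMTFAMin τ S L D) (hτ : 0 < τ) : L.trace ≤ frobNorm S ^ 2 / (2 * τ) := by
  have hle := h.2.2 0 0 .zero (by simp [pdiag_eq_diagonal_diag])
  rw [objF_eq_of_posSemidef h.1, objF_eq_of_posSemidef .zero, trace_zero, add_zero, sub_zero]
    at hle
  rw [le_div_iff₀ (by positivity)]
  linarith [sq_nonneg (frobNorm (S - (L + D)))]

theorem frobNorm_fit_sub_sq_le_abs_sub_mul (h₁ : IsRMTFAMin τ₁ S L₁ D₁)
    (h₂ : IsRMTFAMin τ₂ S L₂ D₂) (hτ₁ : 0 < τ₁) (hτ₂ : 0 < τ₂) :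
    frobNorm (L₂ + D₂ - (L₁ + D₁)) ^ 2 ≤
      |τ₁ - τ₂| * (frobNorm S ^ 2 / (2 * τ₁) + frobNorm S ^ 2 / (2 * τ₂)) := by
  have htrace : |L₂.trace - L₁.trace| ≤
      frobNorm S ^ 2 / (2 * τ₁) + frobNorm S ^ 2 / (2 * τ₂) := by
    rw [abs_le]
    constructor <;>
      linarith [h₁.trace_le hτ₁, h₂.trace_le hτ₂, h₁.1.trace_nonneg, h₂.1.trace_nonneg]
  calc
    frobNorm (L₂ + D₂ - (L₁ + D₁)) ^ 2 ≤ (τ₁ - τ₂) * (L₂.trace - L₁.trace) :=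
      frobNorm_fit_sub_sq_le h₁ h₂
    _ ≤ |τ₁ - τ₂| * |L₂.trace - L₁.trace| := abs_mul (τ₁ - τ₂) _ ▸ le_abs_self _
    _ ≤ _ := by gcongr

theorem continuousOn_fit {Lhat Dhat : ℝ → Matrix (Fin p) (Fin p) ℝ}
    (hmin : ∀ τ, 0 < τ → IsRMTFAMin τ S (Lhat τ) (Dhat τ)) :
    ContinuousOn (fun τ ↦ Lhat τ + Dhat τ) (Set.Ioi 0) := by
  intro τ (hτ : 0 < τ)
  have hbound : Tendsto
      (fun σ ↦ |τ - σ| * (frobNorm S ^ 2 / (2 * τ) + frobNorm S ^ 2 / (2 * σ)))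
      (𝓝[Set.Ioi 0] τ) (𝓝 0) := by
    have hcont : ContinuousAt
        (fun σ ↦ |τ - σ| * (frobNorm S ^ 2 / (2 * τ) + frobNorm S ^ 2 / (2 * σ))) τ := by
      fun_prop (disch := positivity)
    simpa using hcont.tendsto.mono_left nhdsWithin_le_nhds
  have hsq : Tendsto (fun σ ↦ frobNorm (Lhat σ + Dhat σ - (Lhat τ + Dhat τ)) ^ 2)
      (𝓝[Set.Ioi 0] τ) (𝓝 0) := by
    refine squeeze_zero' (.of_forall fun _ ↦ sq_nonneg _) ?_ hbound
    filter_upwards [self_mem_nhdsWithin] with σ hσ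
    exact (hmin τ hτ).frobNorm_fit_sub_sq_le_abs_sub_mul (hmin σ hσ) hτ hσ
  refine tendsto_iff_frobNorm_sub_tendsto_zero.2 ?_
  simpa only [Real.sqrt_sq (frobNorm_nonneg _), Real.sqrt_zero] using hsq.sqrt

end IsRMTFAMin

theorem rmtfa_solution_continuous_general {p : ℕ} {S : Matrix (Fin p) (Fin p) ℝ}
    {Lhat Dhat : ℝ → Matrix (Fin p) (Fin p) ℝ}
    (hmin : ∀ τ : ℝ, 0 < τ → IsRMTFAMin τ S (Lhat τ) (Dhat τ)) :
    ContinuousOn (fun τ ↦ (Lhat τ, Dhat τ)) (Set.Ioi 0) := by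
  have hfit := IsRMTFAMin.continuousOn_fit hmin
  have hDhat : ContinuousOn Dhat (Set.Ioi 0) := by
    refine ContinuousOn.congr ?_ fun τ hτ ↦ (hmin τ hτ).diagonal_eq_of_fit (ne_of_gt hτ)
    have hresidual := (continuousOn_const (c := S)).sub hfit
    have hscale : ContinuousOn (fun τ : ℝ ↦ (2 * τ)⁻¹) (Set.Ioi 0) :=
      (continuousOn_const.mul continuousOn_id).inv₀ fun τ hτ ↦ mul_ne_zero two_ne_zero (ne_of_gt hτ)
    exact (continuous_pdiag.comp_continuousOn hfit).sub <| hscale.smul <|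
      continuous_pdiag.comp_continuousOn <| hfit.mul <|
        hresidual.add <| continuous_id.matrix_transpose.comp_continuousOn hresidual
  have hLhat : ContinuousOn Lhat (Set.Ioi 0) :=
    (hfit.sub hDhat).congr fun _ _ ↦ (add_sub_cancel_right _ _).symm
  exact hLhat.prodMk hDhat

/-- the relaxed-MTFA solution map `τ ↦ (L̂(τ), D̂(τ))` is continuous on
`(0, ∞)`. -/
theorem rmtfa_solution_continuous (p : ℕ) (S : Matrix (Fin p) (Fin p) ℝ)
    (hS : S.IsHermitian)
    (Lhat Dhat : ℝ → Matrix (Fin p) (Fin p) ℝ)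
    (hmin : ∀ τ : ℝ, 0 < τ → IsRMTFAMin τ S (Lhat τ) (Dhat τ)) :
    ∀ τ : ℝ, 0 < τ → ∀ ε : ℝ, 0 < ε → ∃ δ : ℝ, 0 < δ ∧
      ∀ τ' : ℝ, 0 < τ' → |τ' - τ| < δ →
        Real.sqrt ((frobNorm (Lhat τ' - Lhat τ)) ^ 2 +
          (frobNorm (Dhat τ' - Dhat τ)) ^ 2) < ε :=
  fun _ hτ _ hε ↦
    exists_forall_sqrt_frobNorm_sq_add_lt (rmtfa_solution_continuous_general hmin) hτ hε
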